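/- Let b > 0, let v₀ ∈ ℝ^{n+2} be null and nonzero, let w̃ satisfy ⟨v₀,w̃⟩ = 0 and ‖w̃‖² > 0, and let Δ:(0,b) → End(ℝ^{n+2}) be continuous and bounded with each Δ(t) skew-adjoint with respect to the Minkowski form. Define Ω(t) := −(1/t)·(v₀∧w̃) + Δ(t), and for each p ∈ (0,b) let G_p:(0,b) → End(ℝ^{n+2}) be differentiable with G_p′(t) = G_p(t)∘Ω(t) and G_p(p) = id (each G_p(t) then preserves the Minkowski form, hence is invertible). Then there is a continuous map k:[0,b) → ℝ^{n+2} with k(t) null and nonzero for every t and k(0) = −(‖w̃‖²/2)·v₀, such that for every p ∈ (0,b): (1 + (ln(t/p))²)^{−1}·G_p(t) converges to the rank-one endomorphism k(p)v₀* as t → 0⁺, and k(t) = G_p(t)^{−1}(k(p)) for all p,t ∈ (0,b). -/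

import Mathlib

open scoped BigOperators Topology
open Filter Set MeasureTheory

noncomputable section

abbrev E (n : ℕ) := EuclideanSpace ℝ (Fin (n + 2))

/-- Minkowski inner product of signature (n+1,1). -/
def mink {n : ℕ} (x y : E n) : ℝ :=
  ∑ i, (if i = Fin.last (n + 1) then (-1 : ℝ) else 1) * x i * y i

variable {n : ℕ}

lemma mink_comm (x y : E n) : mink x y = mink y x :=
  Finset.sum_congr rfl fun i _ => by ring

lemma mink_add_right (v x y : E n) : mink v (x + y) = mink v x + mink v y := by
  simp [mink, mul_add, Finset.sum_add_distrib]

lemma mink_smul_right (v : E n) (c : ℝ) (x : E n) : mink v (c • x) = c * mink v x := by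
  unfold mink
  rw [Finset.mul_sum]
  refine Finset.sum_congr rfl fun i _ => ?_
  simp only [PiLp.smul_apply, smul_eq_mul]
  ring

lemma mink_add_left (x y v : E n) : mink (x + y) v = mink x v + mink y v := by
  rw [mink_comm, mink_add_right, mink_comm v x, mink_comm v y]

lemma mink_smul_left (c : ℝ) (x v : E n) : mink (c • x) v = c * mink x v := by
  rw [mink_comm, mink_smul_right, mink_comm v x]

/-- `v ∧ w` as an endomorphism: `x ↦ ⟨v,x⟩ w − ⟨w,x⟩ v`. -/
def wedge {n : ℕ} (v w : E n) : E n →L[ℝ] E n :=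
  LinearMap.toContinuousLinearMap
    { toFun := fun x => mink v x • w - mink w x • v
      map_add' := by
        intro x y
        simp only [mink_add_right, add_smul]
        abel
      map_smul' := by
        intro c x
        simp only [mink_smul_right, RingHom.id_apply, mul_smul, smul_sub] }

/-- rank one endomorphism `vw* : x ↦ ⟨x,w⟩ v`. -/
def rankOne {n : ℕ} (v w : E n) : E n →L[ℝ] E n :=
  LinearMap.toContinuousLinearMap
    { toFun := fun x => mink x w • v
      map_add' := by
        intro x y
        simp only [mink_add_left, add_smul]
      map_smul' := by
        intro c x
        simp only [mink_smul_left, RingHom.id_apply, mul_smul] }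

lemma lim_aux {F : Type*} [NormedAddCommGroup F] [NormedSpace ℝ F] [CompleteSpace F]
    (h h' : ℝ → F) (a K : ℝ) (ha : 0 < a) (hK : 0 ≤ K)
    (hd : ∀ s ∈ Set.Ioc (0:ℝ) a, HasDerivAt h (h' s) s)
    (hb : ∀ s ∈ Set.Ioc (0:ℝ) a, ‖h' s‖ ≤ K * ‖h s‖) :
    ∃ (H0 : F) (L : ℝ), ∀ s ∈ Set.Ioc (0:ℝ) a, ‖h s - H0‖ ≤ L * s := by
  have bd : ∀ s ∈ Set.Ioc (0:ℝ) a, ‖h s‖ ≤ ‖h a‖ * Real.exp (K * a) := by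
    intro s hs
    have hmem : ∀ x ∈ Set.Icc (0:ℝ) (a - s), a - x ∈ Set.Ioc (0:ℝ) a := fun x hx =>
      ⟨by linarith [hx.2, hs.1], by linarith [hx.1]⟩
    have hder : ∀ x ∈ Set.Icc (0:ℝ) (a - s),
        HasDerivAt (fun x => h (a - x)) (-(h' (a - x))) x := fun x hx => by
      have h1 : HasDerivAt (fun x : ℝ => a - x) (-1) x := by
        simpa using (hasDerivAt_id x).const_sub a
      simpa [Function.comp_def] using (hd _ (hmem x hx)).scomp x h1
    have := norm_le_gronwallBound_of_norm_deriv_right_le (f := fun x => h (a - x))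
      (f' := fun x => -(h' (a - x))) (δ := ‖h a‖) (K := K) (ε := 0) (a := 0) (b := a - s)
      (fun x hx => (hder x hx).continuousAt.continuousWithinAt)
      (fun x hx => (hder x (Set.Ico_subset_Icc_self hx)).hasDerivWithinAt)
      (by simp)
      (fun x hx => by
        simpa using hb _ (hmem x (Set.Ico_subset_Icc_self hx)))
      (a - s) ⟨by linarith [hs.2], le_rfl⟩
    rw [gronwallBound_ε0] at this
    simp only [sub_sub_cancel, sub_zero] at this
    refine this.trans ?_
    gcongr
    linarith [hs.1]
  set L : ℝ := K * (‖h a‖ * Real.exp (K * a)) with hL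
  have hL0 : 0 ≤ L := by positivity
  have lip : ∀ x ∈ Set.Ioc (0:ℝ) a, ∀ y ∈ Set.Ioc (0:ℝ) a, ‖h y - h x‖ ≤ L * ‖y - x‖ := by
    intro x hx y hy
    exact Convex.norm_image_sub_le_of_norm_hasDerivWithin_le
      (fun z hz => (hd z hz).hasDerivWithinAt)
      (fun z hz => (hb z hz).trans (mul_le_mul_of_nonneg_left (bd z hz) hK))
      (convex_Ioc 0 a) hx hy
  have hlip : LipschitzOnWith L.toNNReal h (Set.Ioc 0 a) := by
    refine LipschitzOnWith.of_dist_le_mul fun x hx y hy => ?_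
    rw [dist_eq_norm, dist_eq_norm, Real.coe_toNNReal _ hL0]
    exact lip y hy x hx
  have hu : Tendsto (fun n : ℕ => a * (1 / ((n:ℝ) + 1))) atTop (𝓝 0) := by
    simpa using (tendsto_one_div_add_atTop_nhds_zero_nat (𝕜 := ℝ)).const_mul a
  have hmem : ∀ n : ℕ, a * (1 / ((n:ℝ) + 1)) ∈ Set.Ioc 0 a := by
    intro n
    refine ⟨by positivity, ?_⟩
    have : 1 / ((n:ℝ) + 1) ≤ 1 := by
      rw [div_le_one (by positivity)]
      linarith [Nat.cast_nonneg (α := ℝ) n]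
    nlinarith
  have hc := hlip.cauchySeq_comp hu.cauchySeq (by rintro _ ⟨n, rfl⟩; exact hmem n)
  obtain ⟨H0, hH0⟩ := cauchySeq_tendsto_of_complete hc
  refine ⟨H0, L, fun s hs => ?_⟩
  have t1 := (tendsto_const_nhds (x := h s)).sub hH0 |>.norm
  have t2 := ((tendsto_const_nhds (x := s)).sub hu |>.norm).const_mul L
  have := le_of_tendsto_of_tendsto' t1 t2 (fun n => lip _ (hmem n) _ hs)
  simpa [abs_of_pos hs.1] using this

def UU {R : Type*} [NormedRing R] [NormedAlgebra ℝ R] (N : R) (x : ℝ) : R :=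
  1 + x • N + (x ^ 2 / 2) • N ^ 2

lemma UU_mul {R : Type*} [NormedRing R] [NormedAlgebra ℝ R] (N : R) (hN : N ^ 3 = 0) (x : ℝ) :
    UU N x * UU N (-x) = 1 := by
  have h4 : N ^ 4 = 0 := by rw [pow_succ, hN, zero_mul]
  have h3 : N * N ^ 2 = 0 := by rw [← pow_succ', hN]
  have h3' : N ^ 2 * N = 0 := by rw [← pow_succ, hN]
  have h4' : N ^ 2 * N ^ 2 = 0 := by rw [← pow_add, h4]
  simp only [UU, add_mul, mul_add, one_mul, mul_one, smul_mul_assoc, mul_smul_comm, h3, h3', h4',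
    smul_zero, ← pow_two]
  module

lemma UU_norm {R : Type*} [NormedRing R] [NormedAlgebra ℝ R] (N : R) (x : ℝ) :
    ‖UU N x‖ ≤ ‖(1:R)‖ + |x| * ‖N‖ + (x ^ 2 / 2) * ‖N ^ 2‖ := by
  unfold UU
  refine (norm_add₃_le).trans ?_
  rw [norm_smul, norm_smul, Real.norm_eq_abs, Real.norm_eq_abs, abs_of_nonneg (by positivity : 0 ≤ x^2/2)]

lemma UU_bound {R : Type*} [NormedRing R] [NormedAlgebra ℝ R] (N : R) (s x : ℝ)
    (hs : 0 < s) (hs1 : s ≤ 1) (hx : |x| = 5 * |Real.log s|) :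
    s ^ 2 * ‖UU N x‖ ≤ ‖(1:R)‖ + 5 * ‖N‖ + 25 / 2 * ‖N ^ 2‖ := by
  have h1 := Real.abs_log_mul_self_lt s hs hs1
  rw [abs_mul, abs_of_pos hs] at h1
  have hl : 0 ≤ |Real.log s| := abs_nonneg _
  have h2 : s ^ 2 ≤ 1 := pow_le_one₀ hs.le hs1
  have h3 : s ^ 2 * |x| ≤ 5 := by
    rw [hx]
    nlinarith
  have h4 : s ^ 2 * (x ^ 2 / 2) ≤ 25 / 2 := by
    rw [← sq_abs x, hx]
    have : (|Real.log s| * s) ^ 2 ≤ 1 := pow_le_one₀ (by positivity) h1.le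
    nlinarith
  calc s ^ 2 * ‖UU N x‖ ≤ s ^ 2 * (‖(1:R)‖ + |x| * ‖N‖ + (x ^ 2 / 2) * ‖N ^ 2‖) := by
        gcongr; exact UU_norm N x
    _ = s ^ 2 * ‖(1:R)‖ + (s ^ 2 * |x|) * ‖N‖ + (s ^ 2 * (x ^ 2 / 2)) * ‖N ^ 2‖ := by ring
    _ ≤ 1 * ‖(1:R)‖ + 5 * ‖N‖ + 25 / 2 * ‖N ^ 2‖ := by gcongr
    _ = _ := by ring

lemma UU_deriv {R : Type*} [NormedRing R] [NormedAlgebra ℝ R] (N : R) (hN : N ^ 3 = 0) (t : ℝ)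
    (ht : t ≠ 0) :
    HasDerivAt (fun t => UU N (Real.log t)) (t⁻¹ • (N * UU N (Real.log t))) t := by
  have h3 : N * N ^ 2 = 0 := by rw [← pow_succ', hN]
  have h1 := Real.hasDerivAt_log ht
  have h2 := (((hasDerivAt_const t (1:R)).add (h1.smul_const N)).add
    (((h1.pow 2).div_const 2).smul_const (N ^ 2)))
  refine HasDerivAt.congr_deriv (f := fun t => UU N (Real.log t)) h2 ?_
  simp only [UU, mul_add, mul_one, mul_smul_comm, h3, smul_zero, ← pow_two]
  simp only [smul_add, smul_smul]
  simp
  congr 1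
  ring

lemma main_lim {R : Type*} [NormedRing R] [NormedAlgebra ℝ R] [CompleteSpace R]
    (N : R) (hN : N ^ 3 = 0) (b D : ℝ) (hb : 0 < b) (Δ g : ℝ → R)
    (hD : ∀ t ∈ Set.Ioo (0:ℝ) b, ‖Δ t‖ ≤ D)
    (hg : ∀ t ∈ Set.Ioo (0:ℝ) b, HasDerivAt g (g t * ((-t⁻¹) • N + Δ t)) t) :
    ∃ (H0 : R) (L : ℝ), ∀ᶠ t in 𝓝[>] (0:ℝ),
      ‖g t * UU N (Real.log t) - H0‖ ≤ L * t ^ (1 / 5 : ℝ) := by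
  set a : ℝ := min 1 (b / 2) with ha
  have ha0 : 0 < a := by positivity
  have hmem : ∀ s ∈ Set.Ioc (0:ℝ) a, 0 < s ∧ s ≤ 1 ∧ s ^ 5 ∈ Set.Ioo 0 b := by
    intro s hs
    have h1 : s ≤ 1 := hs.2.trans (min_le_left _ _)
    have h2 : s ≤ b / 2 := hs.2.trans (min_le_right _ _)
    refine ⟨hs.1, h1, pow_pos hs.1 5, ?_⟩
    have : s ^ 5 ≤ s := pow_le_of_le_one hs.1.le h1 (by norm_num)
    linarith
  have hD0 : 0 ≤ D := (norm_nonneg _).trans (hD (b / 2) ⟨by positivity, by linarith⟩)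
  set C : ℝ := ‖(1:R)‖ + 5 * ‖N‖ + 25 / 2 * ‖N ^ 2‖ with hC
  have hC0 : 0 ≤ C := by positivity
  have key : ∀ t ∈ Set.Ioo (0:ℝ) b, HasDerivAt (fun t => g t * UU N (Real.log t))
      (g t * Δ t * UU N (Real.log t)) t := by
    intro t ht
    refine HasDerivAt.congr_deriv (f := fun t => g t * UU N (Real.log t))
      ((hg t ht).mul (UU_deriv N hN t ht.1.ne')) ?_
    simp only [mul_add, add_mul, mul_smul_comm, smul_mul_assoc, neg_smul, mul_assoc, mul_neg, neg_mul]
    abel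
  obtain ⟨H0, L, hL⟩ := lim_aux (fun s => g (s ^ 5) * UU N (Real.log (s ^ 5)))
    (fun s => (5 * s ^ 4) • (g (s ^ 5) * Δ (s ^ 5) * UU N (Real.log (s ^ 5)))) a (5 * (C * D * C))
    ha0 (by positivity)
    (fun s hs => by
      have := HasDerivAt.scomp (h := fun s : ℝ => s ^ 5) s (key _ (hmem s hs).2.2) (hasDerivAt_pow 5 s)
      simpa [Function.comp_def] using this)
    (fun s hs => by
      obtain ⟨h0, h1, h2⟩ := hmem s hs
      have hl : |Real.log (s ^ 5)| = 5 * |Real.log s| := by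
        rw [Real.log_pow, abs_mul]; norm_num
      have b1 := UU_bound N s (Real.log (s ^ 5)) h0 h1 hl
      have b2 := UU_bound N s (-Real.log (s ^ 5)) h0 h1 (by rwa [abs_neg])
      rw [← hC] at b1 b2
      set U := UU N (Real.log (s ^ 5)) with hU
      set V := UU N (-Real.log (s ^ 5)) with hV
      have e : g (s ^ 5) * Δ (s ^ 5) * U = (g (s ^ 5) * U) * V * Δ (s ^ 5) * U := by
        rw [mul_assoc (g (s ^ 5)) U V, UU_mul N hN, mul_one]
      rw [e, norm_smul, Real.norm_of_nonneg (by positivity)]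
      calc 5 * s ^ 4 * ‖(g (s ^ 5) * U) * V * Δ (s ^ 5) * U‖
          ≤ 5 * s ^ 4 * (‖g (s ^ 5) * U‖ * ‖V‖ * ‖Δ (s ^ 5)‖ * ‖U‖) := by
            gcongr
            refine (norm_mul_le _ _).trans ?_
            gcongr
            refine (norm_mul_le _ _).trans ?_
            gcongr
            exact norm_mul_le _ _
        _ ≤ 5 * s ^ 4 * (‖g (s ^ 5) * U‖ * ‖V‖ * D * ‖U‖) := by
            gcongr
            exact hD _ h2
        _ = 5 * ((s ^ 2 * ‖V‖) * D * (s ^ 2 * ‖U‖)) * ‖g (s ^ 5) * U‖ := by ring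
        _ ≤ 5 * (C * D * C) * ‖g (s ^ 5) * U‖ := by gcongr)
  refine ⟨H0, L, ?_⟩
  have ha5 : 0 < a ^ 5 := by positivity
  filter_upwards [Ioo_mem_nhdsGT ha5] with t ht
  have e : (t ^ (1 / 5 : ℝ)) ^ 5 = t := by
    rw [← Real.rpow_natCast, ← Real.rpow_mul ht.1.le]; norm_num
  have := hL (t ^ (1 / 5 : ℝ)) ⟨Real.rpow_pos_of_pos ht.1 _, by
    refine le_of_lt (lt_of_pow_lt_pow_left₀ 5 ha0.le ?_)
    rw [e]; exact ht.2⟩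
  simpa only [e] using this

section gen
set_option linter.unusedSectionVars false
variable {R : Type*} [NormedRing R] [NormedAlgebra ℝ R] [StarRing R] [NormedStarGroup R]
  [StarModule ℝ R]

lemma gl_add (J A B : R) : J * star (A + B) * J = J * star A * J + J * star B * J := by
  simp [mul_add, add_mul]

lemma gl_sub (J A B : R) : J * star (A - B) * J = J * star A * J - J * star B * J := by
  simp [mul_sub, sub_mul]

lemma gl_smul (J A : R) (c : ℝ) : J * star (c • A) * J = c • (J * star A * J) := by
  simp [star_smul]

lemma gl_norm (J A : R) : ‖J * star A * J‖ ≤ ‖J‖ * ‖A‖ * ‖J‖ := by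
  refine (norm_mul_le _ _).trans ?_
  gcongr
  refine (norm_mul_le _ _).trans ?_
  rw [norm_star]

lemma gl_cont (J : R) : Continuous fun A : R => J * star A * J := by
  fun_prop

lemma gl_neg (A B : R) : -A * -B = A * B := by simp

lemma gl_zero (A B C : R) : A * B * C + A * (-B * C) = 0 := by
  simp [mul_assoc]

lemma gl_ms (A B : R) (c : ℝ) : A * (c • B) = c • (A * B) := by
  simp

end gen

def JJ (n : ℕ) : E n →L[ℝ] E n :=
  LinearMap.toContinuousLinearMap
    { toFun := fun x => WithLp.toLp 2 fun i => (if i = Fin.last (n + 1) then (-1 : ℝ) else 1) * x i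
      map_add' := by
        intro x y
        ext i
        simp [mul_add]
      map_smul' := by
        intro c x
        ext i
        simp }

lemma JJ_apply {n : ℕ} (x : E n) (i : Fin (n + 2)) :
    JJ n x i = (if i = Fin.last (n + 1) then (-1 : ℝ) else 1) * x i := rfl

lemma mink_eq {n : ℕ} (x y : E n) : mink x y = inner ℝ (JJ n x) y := by
  simp only [mink, PiLp.inner_apply, JJ_apply]
  refine Finset.sum_congr rfl fun i _ => ?_
  simp [mul_comm]

lemma mink_eq' {n : ℕ} (x y : E n) : mink x y = inner ℝ x (JJ n y) := by
  rw [mink_comm, mink_eq, real_inner_comm]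

lemma JJ_sq {n : ℕ} : JJ n * JJ n = 1 := by
  ext x i
  simp only [mul_apply_eq_comp, JJ_apply, one_apply_eq_self]
  split_ifs <;> simp

lemma JJ_star {n : ℕ} : star (JJ n) = JJ n := by
  rw [ContinuousLinearMap.star_eq_adjoint]
  symm
  rw [ContinuousLinearMap.eq_adjoint_iff]
  intro x y
  rw [← mink_eq, mink_eq']

def SS {n : ℕ} (A : E n →L[ℝ] E n) : E n →L[ℝ] E n := JJ n * star A * JJ n

lemma SS_mul {n : ℕ} (A B : E n →L[ℝ] E n) : SS (A * B) = SS B * SS A := by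
  simp only [SS, star_mul]
  calc JJ n * (star B * star A) * JJ n = JJ n * star B * 1 * star A * JJ n := by
        simp only [mul_assoc, one_mul]
    _ = _ := by rw [← JJ_sq (n := n)]; simp only [mul_assoc]

lemma SS_add {n : ℕ} (A B : E n →L[ℝ] E n) : SS (A + B) = SS A + SS B := by
  exact gl_add _ _ _

lemma SS_sub {n : ℕ} (A B : E n →L[ℝ] E n) : SS (A - B) = SS A - SS B := by
  exact gl_sub _ _ _

lemma SS_smul {n : ℕ} (c : ℝ) (A : E n →L[ℝ] E n) : SS (c • A) = c • SS A := by
  exact gl_smul _ _ _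

lemma SS_one {n : ℕ} : SS (1 : E n →L[ℝ] E n) = 1 := by
  simp [SS, JJ_sq]

lemma SS_SS {n : ℕ} (A : E n →L[ℝ] E n) : SS (SS A) = A := by
  simp only [SS, star_mul, star_star, JJ_star]
  calc JJ n * (JJ n * (A * JJ n)) * JJ n = (JJ n * JJ n) * A * (JJ n * JJ n) := by
        simp only [mul_assoc]
    _ = A := by simp [JJ_sq]

lemma SS_norm {n : ℕ} (A : E n →L[ℝ] E n) : ‖SS A‖ ≤ ‖JJ n‖ * ‖A‖ * ‖JJ n‖ :=
  gl_norm _ _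

lemma SS_cont {n : ℕ} : Continuous (SS (n := n)) := by
  exact gl_cont _

lemma SS_deriv {n : ℕ} {f : ℝ → E n →L[ℝ] E n} {f' : E n →L[ℝ] E n} {t : ℝ}
    (h : HasDerivAt f f' t) : HasDerivAt (fun t => SS (f t)) (SS f') t := by
  unfold SS
  exact (h.star.const_mul (JJ n)).mul_const (JJ n)

lemma SS_adj {n : ℕ} (A : E n →L[ℝ] E n) (x y : E n) : mink (SS A x) y = mink x (A y) := by
  rw [mink_eq, mink_eq]
  simp only [SS, ← mul_apply_eq_comp, ← mul_assoc, JJ_sq, one_mul]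
  simp only [mul_apply_eq_comp, ContinuousLinearMap.star_eq_adjoint]
  rw [ContinuousLinearMap.adjoint_inner_left]

lemma mink_ext {n : ℕ} {x y : E n} (h : ∀ z, mink x z = mink y z) : x = y := by
  have h1 : JJ n x = JJ n y := by
    refine ext_inner_right ℝ fun z => ?_
    rw [← mink_eq, ← mink_eq, h]
  have h2 := congrArg (JJ n) h1
  simpa only [← mul_apply_eq_comp, JJ_sq, one_apply_eq_self] using h2

lemma SS_skew {n : ℕ} (A : E n →L[ℝ] E n) (h : ∀ x y : E n, mink (A x) y = - mink x (A y)) :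
    SS A = -A := by
  ext1 x
  refine mink_ext fun z => ?_
  rw [SS_adj, neg_apply, ← neg_one_smul ℝ (A x), mink_smul_left, h]
  ring

lemma wedge_apply {n : ℕ} (v w x : E n) : wedge v w x = mink v x • w - mink w x • v := rfl

lemma rankOne_apply {n : ℕ} (v w x : E n) : rankOne v w x = mink x w • v := rfl

lemma mink_sub_right {n : ℕ} (v x y : E n) : mink v (x - y) = mink v x - mink v y := by
  rw [sub_eq_add_neg, ← neg_one_smul ℝ y, mink_add_right, mink_smul_right]; ring

lemma mink_sub_left {n : ℕ} (v x y : E n) : mink (x - y) v = mink x v - mink y v := by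
  rw [mink_comm, mink_sub_right, mink_comm v x, mink_comm v y]

lemma SS_wedge {n : ℕ} (v w : E n) : SS (wedge v w) = - wedge v w := by
  refine SS_skew _ fun x y => ?_
  simp only [wedge_apply, mink_sub_left, mink_sub_right, mink_smul_left, mink_smul_right]
  rw [mink_comm x w, mink_comm x v]
  ring

lemma wedge_sq {n : ℕ} (v w : E n) (h0 : mink v v = 0) (horth : mink v w = 0) :
    wedge v w ^ 2 = (-(mink w w)) • rankOne v v := by
  ext1 x
  rw [pow_two, mul_apply_eq_comp, smul_apply, rankOne_apply]
  simp only [wedge_apply, mink_sub_right, mink_smul_right, h0, horth, mink_comm w v, mink_comm x v]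
  module

lemma wedge_self {n : ℕ} (v w : E n) (h0 : mink v v = 0) (horth : mink v w = 0) :
    wedge v w v = 0 := by
  simp [wedge_apply, h0, mink_comm w v, horth]

lemma wedge_cube {n : ℕ} (v w : E n) (h0 : mink v v = 0) (horth : mink v w = 0) :
    wedge v w ^ 3 = 0 := by
  ext1 x
  rw [pow_succ', wedge_sq v w h0 horth]
  simp [rankOne_apply, wedge_self v w h0 horth]

lemma SS_UU {n : ℕ} (v w : E n) (x : ℝ) : SS (UU (wedge v w) x) = UU (wedge v w) (-x) := by
  simp only [UU, SS_add, SS_one, SS_smul, pow_two, SS_mul, SS_wedge]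
  rw [gl_neg, neg_mul_neg, neg_smul, smul_neg]

lemma UU_self {n : ℕ} (v w : E n) (h0 : mink v v = 0) (horth : mink v w = 0) (x : ℝ) :
    UU (wedge v w) x v = v := by
  simp [UU, wedge_sq v w h0 horth, rankOne_apply, h0, wedge_self v w h0 horth]

lemma G_const {n : ℕ} (b : ℝ) (X Y Ω : ℝ → E n →L[ℝ] E n)
    (hΩ : ∀ t ∈ Set.Ioo (0:ℝ) b, SS (Ω t) = - Ω t)
    (hX : ∀ t ∈ Set.Ioo (0:ℝ) b, HasDerivAt X (X t * Ω t) t)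
    (hY : ∀ t ∈ Set.Ioo (0:ℝ) b, HasDerivAt Y (Y t * Ω t) t)
    (s t : ℝ) (hs : s ∈ Set.Ioo (0:ℝ) b) (ht : t ∈ Set.Ioo (0:ℝ) b) :
    X s * SS (Y s) = X t * SS (Y t) := by
  have hd : ∀ t ∈ Set.Ioo (0:ℝ) b, HasDerivAt (fun t => X t * SS (Y t)) 0 t := by
    intro t ht
    refine HasDerivAt.congr_deriv (f := fun t => X t * SS (Y t))
      ((hX t ht).mul (SS_deriv (hY t ht))) ?_
    rw [SS_mul, hΩ t ht]
    exact gl_zero _ _ _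
  exact isOpen_Ioo.is_const_of_deriv_eq_zero (f := fun t => X t * SS (Y t)) isPreconnected_Ioo
    (fun z hz => (hd z hz).differentiableAt.differentiableWithinAt)
    (fun z hz => (hd z hz).deriv) hs ht

lemma log_lim1 : Tendsto (fun x : ℝ => (1 + x ^ 2)⁻¹) atBot (𝓝 0) := by
  refine tendsto_inv_atTop_zero.comp ?_
  refine tendsto_atTop_add_const_left _ _ ?_
  have := (tendsto_pow_atTop (α := ℝ) (n := 2) (by norm_num)).comp
    (tendsto_abs_atBot_atTop (G := ℝ))
  simpa [Function.comp_def] using this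

lemma log_lim2 : Tendsto (fun x : ℝ => (1 + x ^ 2)⁻¹ * x) atBot (𝓝 0) := by
  have h1 : Tendsto (fun x : ℝ => |x|⁻¹) atBot (𝓝 0) :=
    tendsto_inv_atTop_zero.comp tendsto_abs_atBot_atTop
  refine squeeze_zero_norm' ?_ h1
  filter_upwards [eventually_lt_atBot 0] with x hx
  have hx' : 0 < |x| := abs_pos.mpr hx.ne
  rw [norm_mul, norm_inv, Real.norm_eq_abs, Real.norm_eq_abs, abs_of_pos (by positivity : 0 < 1 + x^2),
    ← sq_abs, inv_mul_le_iff₀ (by positivity)]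
  have : (1 + |x| ^ 2) * |x|⁻¹ = |x|⁻¹ + |x| := by field_simp
  rw [this]
  have := inv_pos.mpr hx'
  linarith

lemma log_lim3 : Tendsto (fun x : ℝ => (1 + x ^ 2)⁻¹ * x ^ 2) atBot (𝓝 1) := by
  have := (tendsto_const_nhds (x := (1:ℝ))).sub log_lim1
  rw [sub_zero] at this
  refine this.congr fun x => ?_
  have : 0 < 1 + x ^ 2 := by positivity
  field_simp
  ring

lemma UU_lim {R : Type*} [NormedRing R] [NormedAlgebra ℝ R] (N : R) (q : ℝ) :
    Tendsto (fun y : ℝ => (1 + y ^ 2)⁻¹ • UU N (-(y + q))) atBot (𝓝 ((1 / 2 : ℝ) • N ^ 2)) := by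
  have a1 := log_lim1.smul_const (1 : R)
  have a2 := ((log_lim2.add (log_lim1.const_mul q)).neg).smul_const N
  have a3 := (((log_lim3.add (log_lim2.const_mul (2 * q))).add
    (log_lim1.const_mul (q ^ 2))).const_mul (1 / 2)).smul_const (N ^ 2)
  have := (a1.add a2).add a3
  simp only [zero_smul, mul_zero, add_zero, neg_zero, zero_add, mul_one] at this
  refine this.congr fun y => ?_
  simp only [UU, smul_add, smul_smul]
  congr 2
  · congr 1
    ring
  · ring

lemma UU_zero {R : Type*} [NormedRing R] [NormedAlgebra ℝ R] (N : R) :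
    Tendsto (fun t : ℝ => ‖UU N (Real.log t)‖ * t ^ (1 / 5 : ℝ)) (𝓝[>] 0) (𝓝 0) := by
  have b1 : Tendsto (fun t : ℝ => t ^ (1 / 5 : ℝ)) (𝓝[>] 0) (𝓝 0) := by
    have := (Real.continuousAt_rpow_const 0 (1 / 5 : ℝ) (Or.inr (by norm_num))).tendsto
    rw [Real.zero_rpow (by norm_num)] at this
    exact this.mono_left nhdsWithin_le_nhds
  have b2 := (tendsto_log_mul_rpow_nhdsGT_zero (r := 1 / 5) (by norm_num)).abs
  have b3 := (tendsto_log_mul_rpow_nhdsGT_zero (r := 1 / 10) (by norm_num)).pow 2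
  have := ((b1.const_mul ‖(1:R)‖).add (b2.mul_const ‖N‖)).add (b3.mul_const (‖N ^ 2‖ / 2))
  simp only [abs_zero, mul_zero, zero_mul, add_zero, ne_eq, OfNat.ofNat_ne_zero,
    not_false_eq_true, zero_pow] at this
  refine squeeze_zero' ?_ ?_ this
  · filter_upwards [self_mem_nhdsWithin] with t ht
    have : 0 ≤ t := le_of_lt ht
    positivity
  · filter_upwards [self_mem_nhdsWithin] with t ht
    have h0 : (0:ℝ) < t := ht
    have e : t ^ (1 / 5 : ℝ) = (t ^ (1 / 10 : ℝ)) ^ 2 := by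
      rw [← Real.rpow_natCast, ← Real.rpow_mul h0.le]; norm_num
    have hp : 0 ≤ t ^ (1 / 5 : ℝ) := by positivity
    calc ‖UU N (Real.log t)‖ * t ^ (1 / 5 : ℝ)
        ≤ (‖(1:R)‖ + |Real.log t| * ‖N‖ + (Real.log t ^ 2 / 2) * ‖N ^ 2‖) * t ^ (1 / 5 : ℝ) := by
          gcongr; exact UU_norm _ _
      _ = ‖(1:R)‖ * t ^ (1 / 5 : ℝ) + |Real.log t| * t ^ (1 / 5 : ℝ) * ‖N‖
          + (Real.log t ^ 2 * t ^ (1 / 5 : ℝ)) * (‖N ^ 2‖ / 2) := by ring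
      _ = _ := by
          rw [abs_mul, abs_of_nonneg hp, mul_pow, ← e]

lemma clm_ms {n : ℕ} (A B : E n →L[ℝ] E n) (c : ℝ) : A * (c • B) = c • (A * B) := by
  ext1 x
  rw [mul_apply_eq_comp, smul_apply, smul_apply, map_smul, mul_apply_eq_comp]

set_option maxHeartbeats 1000000 in
/-- Corollary 3.4: limiting behaviour of primitives of degenerate pole forms. -/
theorem stmt8 {n : ℕ} (b : ℝ) (hb : 0 < b)
    (v0 w : E n) (h0 : mink v0 v0 = 0) (hv0 : v0 ≠ 0)
    (horth : mink v0 w = 0) (hw : 0 < mink w w)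
    (Δ : ℝ → E n →L[ℝ] E n)
    (hΔc : ContinuousOn Δ (Set.Ioo 0 b))
    (hΔb : ∃ D : ℝ, ∀ t ∈ Set.Ioo (0:ℝ) b, ‖Δ t‖ ≤ D)
    (hΔskew : ∀ t ∈ Set.Ioo (0:ℝ) b, ∀ x y : E n, mink (Δ t x) y = - mink x (Δ t y))
    (G : ℝ → ℝ → E n →L[ℝ] E n)
    (hG : ∀ p ∈ Set.Ioo (0:ℝ) b, ∀ t ∈ Set.Ioo (0:ℝ) b,
      HasDerivAt (G p) (G p t * ((-t⁻¹) • wedge v0 w + Δ t)) t)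
    (hGp : ∀ p ∈ Set.Ioo (0:ℝ) b, G p p = 1) :
    ∃ k : ℝ → E n, ContinuousOn k (Set.Ico 0 b) ∧
      (∀ t ∈ Set.Ico (0:ℝ) b, mink (k t) (k t) = 0 ∧ k t ≠ 0) ∧
      k 0 = (-(mink w w / 2)) • v0 ∧
      ∀ p ∈ Set.Ioo (0:ℝ) b,
        Tendsto (fun t : ℝ => (1 + (Real.log (t / p)) ^ 2)⁻¹ • G p t)
          (𝓝[>] 0) (𝓝 (rankOne (k p) v0)) ∧
        ∀ t ∈ Set.Ioo (0:ℝ) b, G p t (k t) = k p := by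
  obtain ⟨D, hD⟩ := hΔb
  set N := wedge v0 w with hNdef
  have hN : N ^ 3 = 0 := wedge_cube v0 w h0 horth
  have hΩ : ∀ t ∈ Set.Ioo (0:ℝ) b, SS ((-t⁻¹) • N + Δ t) = -((-t⁻¹) • N + Δ t) := by
    intro t ht
    rw [SS_add, SS_smul, SS_wedge, SS_skew _ (hΔskew t ht), smul_neg, neg_add]
  have hconst : ∀ p ∈ Set.Ioo (0:ℝ) b, ∀ q ∈ Set.Ioo (0:ℝ) b, ∀ t ∈ Set.Ioo (0:ℝ) b,
      G p t * SS (G q t) = G p q := by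
    intro p hp q hq t ht
    rw [G_const b (G p) (G q) _ hΩ (hG p hp) (hG q hq) t q ht hq, hGp q hq, SS_one, mul_one]
  have hinv : ∀ p ∈ Set.Ioo (0:ℝ) b, ∀ q ∈ Set.Ioo (0:ℝ) b, SS (G q p) = G p q := by
    intro p hp q hq
    rw [← hconst p hp q hq p hp, hGp p hp, one_mul]
  set p0 : ℝ := b / 2 with hp0
  have hp0m : p0 ∈ Set.Ioo (0:ℝ) b := ⟨by positivity, by rw [hp0]; linarith⟩
  set g := G p0 with hg
  have hgS : ∀ t ∈ Set.Ioo (0:ℝ) b, g t * SS (g t) = 1 := fun t ht => by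
    rw [hconst p0 hp0m p0 hp0m t ht, hGp p0 hp0m]
  have hSg : ∀ t ∈ Set.Ioo (0:ℝ) b, SS (g t) * g t = 1 := fun t ht => by
    have := hconst t ht t ht p0 hp0m
    rwa [hGp t ht, hinv p0 hp0m t ht, ← hinv t ht p0 hp0m] at this
  obtain ⟨H0, L, hL⟩ := main_lim N hN b D hb Δ g hD (hG p0 hp0m)
  have hlog : Tendsto Real.log (𝓝[>] 0) atBot := Real.tendsto_log_nhdsGT_zero
  have hmem : ∀ᶠ t in 𝓝[>] (0:ℝ), t ∈ Set.Ioo (0:ℝ) b := Ioo_mem_nhdsGT hb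
  have hH : Tendsto (fun t => g t * UU N (Real.log t)) (𝓝[>] 0) (𝓝 H0) := by
    rw [tendsto_iff_norm_sub_tendsto_zero]
    have b1 : Tendsto (fun t : ℝ => L * t ^ (1 / 5 : ℝ)) (𝓝[>] 0) (𝓝 0) := by
      have := (Real.continuousAt_rpow_const 0 (1 / 5 : ℝ) (Or.inr (by norm_num))).tendsto
      rw [Real.zero_rpow (by norm_num)] at this
      simpa using (this.mono_left nhdsWithin_le_nhds).const_mul L
    exact squeeze_zero' (Eventually.of_forall fun t => norm_nonneg _) hL b1
  have hVU : ∀ x, UU N (-x) * UU N x = 1 := fun x => by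
    simpa using UU_mul N hN (-x)
  have hSU : ∀ x, SS (UU N x) = UU N (-x) := fun x => SS_UU v0 w x
  have hSH0 : SS H0 * H0 = 1 := by
    have t1 : Tendsto (fun t => SS (g t * UU N (Real.log t)) * (g t * UU N (Real.log t)))
        (𝓝[>] 0) (𝓝 (SS H0 * H0)) := ((SS_cont.tendsto H0).comp hH).mul hH
    refine tendsto_nhds_unique t1 (tendsto_const_nhds.congr' ?_)
    filter_upwards [hmem] with t ht
    rw [SS_mul, hSU, mul_assoc, ← mul_assoc (SS (g t)), hSg t ht, one_mul, hVU]
  set c : ℝ := -(mink w w / 2) with hc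
  have hc0 : c ≠ 0 := by rw [hc]; exact neg_ne_zero.mpr (by positivity)
  set k0 : E n := c • H0 v0 with hk0
  have hSk0 : SS H0 k0 = c • v0 := by
    rw [hk0, map_smul, ← mul_apply_eq_comp, hSH0, one_apply_eq_self]
  have hk0n : mink k0 k0 = 0 := by
    have : mink k0 k0 = c * mink (SS H0 k0) v0 := by
      rw [SS_adj, ← mink_smul_right]
    rw [this, hSk0, mink_smul_left, h0]; ring
  have hk00 : k0 ≠ 0 := by
    intro h
    rw [h, map_zero] at hSk0
    exact (smul_ne_zero hc0 hv0) hSk0.symm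
  set k : ℝ → E n := fun t => if t ≤ 0 then c • v0 else SS (g t) k0 with hk
  have hkpos : ∀ t, 0 < t → k t = SS (g t) k0 := fun t ht => by
    simp only [hk, if_neg (not_le.mpr ht)]
  have hkzero : k 0 = c • v0 := by simp only [hk, le_refl, if_true]
  have hklim : Tendsto k (𝓝[>] 0) (𝓝 (k 0)) := by
    rw [hkzero, tendsto_iff_norm_sub_tendsto_zero]
    have b1 := (UU_zero N).mul_const (|c| * (‖JJ n‖ * L * ‖JJ n‖ * ‖H0 v0‖))
    rw [zero_mul] at b1
    refine squeeze_zero' (Eventually.of_forall fun t => norm_nonneg _) ?_ b1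
    filter_upwards [hmem, hL] with t ht hLt
    set x := Real.log t with hx
    have e1 : g t = (g t * UU N x) * UU N (-x) := by rw [mul_assoc, UU_mul N hN, mul_one]
    have e2 : SS (g t) = UU N x * SS (g t * UU N x) := by
      conv_lhs => rw [e1]
      rw [SS_mul, hSU, neg_neg]
    have e3 : k t - c • v0 = c • (UU N x (SS (g t * UU N x - H0) (H0 v0))) := by
      rw [hkpos t ht.1, e2, SS_sub, sub_apply, ← mul_apply_eq_comp (SS H0),
        hSH0, one_apply_eq_self, map_sub, UU_self v0 w h0 horth, hk0, map_smul,
        mul_apply_eq_comp, smul_sub]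
    rw [e3, norm_smul, Real.norm_eq_abs]
    have hp : 0 ≤ t ^ (1 / 5 : ℝ) := Real.rpow_nonneg ht.1.le _
    calc |c| * ‖UU N x (SS (g t * UU N x - H0) (H0 v0))‖
        ≤ |c| * (‖UU N x‖ * ((‖JJ n‖ * (L * t ^ (1 / 5 : ℝ)) * ‖JJ n‖) * ‖H0 v0‖)) := by
          gcongr
          refine (ContinuousLinearMap.le_opNorm _ _).trans ?_
          gcongr
          refine (ContinuousLinearMap.le_opNorm _ _).trans ?_
          gcongr
          refine (SS_norm _).trans ?_
          gcongr
      _ = _ := by ring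
  have hGk : ∀ p ∈ Set.Ioo (0:ℝ) b, ∀ t ∈ Set.Ioo (0:ℝ) b, G p t (k t) = k p := by
    intro p hp t ht
    rw [hkpos t ht.1, hkpos p hp.1, ← mul_apply_eq_comp, hconst p hp p0 hp0m t ht,
      hinv p hp p0 hp0m]
  refine ⟨k, ?_, ?_, hkzero, fun p hp => ⟨?_, hGk p hp⟩⟩
  · intro t ht
    rcases ht.1.eq_or_lt with h | h
    · subst h
      exact (continuousWithinAt_Ioi_iff_Ici.mp hklim).mono fun x hx => hx.1
    · have hd := SS_deriv (hG p0 hp0m t ⟨h, ht.2⟩)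
      have hcont : ContinuousAt (fun t => SS (g t) k0) t :=
        hd.continuousAt.clm_apply continuousAt_const
      refine (hcont.congr ?_).continuousWithinAt
      filter_upwards [lt_mem_nhds h] with s hs
      rw [hkpos s hs]
  · intro t ht
    rcases ht.1.eq_or_lt with h | h
    · subst h
      rw [hkzero]
      refine ⟨?_, smul_ne_zero hc0 hv0⟩
      rw [mink_smul_left, mink_smul_right, h0]; ring
    · have htm : t ∈ Set.Ioo (0:ℝ) b := ⟨h, ht.2⟩
      rw [hkpos t h]
      have e : g t (SS (g t) k0) = k0 := by
        rw [← mul_apply_eq_comp, hgS t htm, one_apply_eq_self]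
      refine ⟨?_, ?_⟩
      · rw [SS_adj, e, hk0n]
      · intro h
        rw [h, map_zero] at e
        exact hk00 e.symm
  · have hlogp : Tendsto (fun t : ℝ => Real.log (t / p)) (𝓝[>] 0) atBot := by
      have : Tendsto (fun t : ℝ => Real.log t - Real.log p) (𝓝[>] 0) atBot :=
        tendsto_atBot_add_const_right _ _ hlog
      refine this.congr' ?_
      filter_upwards [hmem] with t ht
      rw [Real.log_div ht.1.ne' hp.1.ne']
    have t1 := (UU_lim N (Real.log p)).comp hlogp
    have t2 : Tendsto (fun t : ℝ => G p p0 * (g t * UU N (Real.log t)) *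
        ((1 + (Real.log (t / p)) ^ 2)⁻¹ • UU N (-(Real.log (t / p) + Real.log p)))) (𝓝[>] 0)
        (𝓝 (G p p0 * H0 * ((1 / 2 : ℝ) • N ^ 2))) := (hH.const_mul (G p p0)).mul t1
    have e : rankOne (k p) v0 = G p p0 * H0 * ((1 / 2 : ℝ) • N ^ 2) := by
      ext1 x
      rw [hNdef, wedge_sq v0 w h0 horth, hkpos p hp.1, hinv p hp p0 hp0m, hk0]
      simp only [rankOne_apply, mul_apply_eq_comp, smul_apply, map_smul, smul_smul]
      congr 1
      rw [hc]; ring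
    rw [e]
    refine t2.congr' ?_
    filter_upwards [hmem] with t ht
    have e1 : Real.log (t / p) + Real.log p = Real.log t := by
      rw [Real.log_div ht.1.ne' hp.1.ne']; ring
    have e2 : G p p0 * g t = G p t := by
      rw [← hconst p hp p0 hp0m t ht, mul_assoc, hSg t ht, mul_one]
    rw [e1]
    refine (clm_ms _ _ _).trans ?_
    rw [← mul_assoc, e2, mul_assoc, UU_mul N hN, mul_one]
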